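/- (Saito, formal version for polynomials) Let f ∈ ℂ[x₁,…,xₙ] have zero constant term and an isolated singularity at the origin (its Milnor algebra is finite-dimensional over ℂ), and suppose the image of f in ℂ[[x₁,…,xₙ]] lies in the ideal generated by the images of ∂f/∂x₁,…,∂f/∂xₙ. Then there exist positive integer weights w₁,…,wₙ, a positive integer d, a quasihomogeneous polynomial g ∈ ℂ[x₁,…,xₙ] of type (w;d), and a ℂ-algebra automorphism φ of ℂ[[x₁,…,xₙ]] such that φ(g) = f. -/

import Mathlib

/-!
Saito's theorem for formal power series over `ℂ`, applied to a polynomial `f` with image `F`.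

If some partial derivative of `F` is a unit, `F` is itself a coordinate by the formal inverse
function theorem (`exists_equiv_of_regular`), and `g = xᵢ` with all weights `1` works.

Otherwise the origin is a critical point. Writing `F = ∑ aᵢ ∂ᵢF` gives a derivation `D = ∑ aᵢ ∂ᵢ`
with `D F = F`. Such a `D` preserves the jacobian ideal, which is primary to the maximal ideal, so
`D` vanishes at the origin (`derivation_X_mem`). Adding to `D` fields `∂ᵢF ∂ⱼ - ∂ⱼF ∂ᵢ`, which kill
`F`, one may suppose that `D` multiplies the linear parts of the `∂ᵢF` by `1/2`
(`exists_normalized`). There are formal coordinates `yᵢ` which are generalized eigenvectors of `D`,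
with eigenvalues `λᵢ` (`exists_eigen_coordinates`); let `G` be `F` written in these coordinates. As
`F` has eigenvalue `1` and generalized eigenspaces are independent, every monomial `y^a` of `G`
satisfies `∑ aᵢ λᵢ = 1` (`weight_eq_of_coeff_ne_zero`).

It remains to replace the complex numbers `λᵢ` by positive integers. Since the Milnor algebra is
finite-dimensional, for each `i` some monomial `yᵢᵇ yⱼ` occurs in `G`
(`exists_axis_monomial`). If `b = 1`, the normalization gives `λᵢ = 1/2`; otherwise `b ≥ 2` and
`b λᵢ + λⱼ = 1`. A `ℚ`-linear retraction `ℂ → ℚ` turns the `λᵢ` into rational numbers with the same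
properties, and these properties force them to be positive (`exists_weights`). After clearing
denominators, positivity of the weights shows that `G` is a polynomial.
-/

open MvPolynomial

noncomputable section

/-- The jacobian ideal ⟨∂f/∂x₁, …, ∂f/∂x_N⟩ of a polynomial, as an ideal of the
formal power series ring. -/
def jacobianIdeal {N : ℕ} (f : MvPolynomial (Fin N) ℂ) : Ideal (MvPowerSeries (Fin N) ℂ) :=
  Ideal.span (Set.range fun i =>
    ((pderiv i f : MvPolynomial (Fin N) ℂ) : MvPowerSeries (Fin N) ℂ))

/-- The Milnor algebra ℂ[[x₁,…,x_N]]/⟨∂f/∂x₁,…,∂f/∂x_N⟩. -/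
abbrev MilnorAlgebra {N : ℕ} (f : MvPolynomial (Fin N) ℂ) :=
  MvPowerSeries (Fin N) ℂ ⧸ jacobianIdeal f

namespace MvPowerSeries.Saito

variable {n : ℕ}

/-! ### The order filtration -/

/-- The power series all of whose terms have degree at least `k`, that is, the `k`-th power of the
maximal ideal. Encoding it as the kernel of finitely many coefficient functionals makes the
finite-dimensionality of the quotients immediate. -/
def fil (n k : ℕ) : Submodule ℂ (MvPowerSeries (Fin n) ℂ) :=
  LinearMap.ker (LinearMap.pi fun a : {a : Fin n →₀ ℕ // a.degree < k} =>
    (coeff (R := ℂ) (a : Fin n →₀ ℕ)))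

lemma mem_fil {k : ℕ} {g : MvPowerSeries (Fin n) ℂ} :
    g ∈ fil n k ↔ ∀ a : Fin n →₀ ℕ, a.degree < k → coeff a g = 0 := by
  simp [fil, LinearMap.mem_ker, funext_iff]

instance (k : ℕ) : FiniteDimensional ℂ (MvPowerSeries (Fin n) ℂ ⧸ fil n k) := by
  have : Finite {a : Fin n →₀ ℕ // a.degree < k} :=
    (Finsupp.finite_of_degree_lt (σ := Fin n) k).to_subtype
  exact Module.Finite.equiv (LinearMap.quotKerEquivRange (LinearMap.pi
    fun a : {a : Fin n →₀ ℕ // a.degree < k} => (coeff (R := ℂ) (a : Fin n →₀ ℕ)))).symm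

lemma fil_anti {k l : ℕ} (h : k ≤ l) : fil n l ≤ fil n k := fun _ hg =>
  mem_fil.2 fun a ha => mem_fil.1 hg a (ha.trans_le h)

lemma mem_fil_zero (g : MvPowerSeries (Fin n) ℂ) : g ∈ fil n 0 :=
  mem_fil.2 fun _ h => absurd h (Nat.not_lt_zero _)

lemma mul_mem_fil {k l : ℕ} {g h : MvPowerSeries (Fin n) ℂ} (hg : g ∈ fil n k)
    (hh : h ∈ fil n l) : g * h ∈ fil n (k + l) := by
  classical
  refine mem_fil.2 fun a ha => ?_
  rw [coeff_mul]
  refine Finset.sum_eq_zero fun p hp => ?_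
  rw [Finset.HasAntidiagonal.mem_antidiagonal] at hp
  have : p.1.degree + p.2.degree < k + l := by rw [← map_add, hp]; exact ha
  rcases lt_or_ge p.1.degree k with h1 | h1
  · rw [mem_fil.1 hg _ h1, zero_mul]
  · rw [mem_fil.1 hh _ (by omega), mul_zero]

lemma mul_mem_fil_left {k : ℕ} (g : MvPowerSeries (Fin n) ℂ) {h : MvPowerSeries (Fin n) ℂ}
    (hh : h ∈ fil n k) : g * h ∈ fil n k := by
  simpa using mul_mem_fil (mem_fil_zero g) hh

lemma eq_zero_of_fil {g : MvPowerSeries (Fin n) ℂ} (h : ∀ k, g ∈ fil n k) : g = 0 := by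
  ext a
  exact mem_fil.1 (h (a.degree + 1)) a (Nat.lt_succ_self _)

lemma mem_fil_one {g : MvPowerSeries (Fin n) ℂ} : g ∈ fil n 1 ↔ constantCoeff g = 0 := by
  rw [mem_fil, ← coeff_zero_eq_constantCoeff_apply]
  refine ⟨fun h => h 0 (by simp), fun h a ha => ?_⟩
  have : a = 0 := by rw [← Finsupp.degree_eq_zero_iff]; omega
  rw [this, h]

lemma mem_fil_two {g : MvPowerSeries (Fin n) ℂ} (h0 : constantCoeff g = 0)
    (h1 : ∀ i, coeff (Finsupp.single i 1) g = 0) : g ∈ fil n 2 := by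
  refine mem_fil.2 fun a ha => ?_
  rcases Nat.lt_or_ge a.degree 1 with h | h
  · exact mem_fil.1 (mem_fil_one.2 h0) a h
  · obtain ⟨i, hi⟩ : ∃ i, a i ≠ 0 := by
      by_contra! hc
      have : a = 0 := by ext i; simp [hc]
      rw [this] at h; simp at h
    have hle : Finsupp.single i 1 ≤ a := by
      rw [Finsupp.single_le_iff]; omega
    obtain ⟨b, rfl⟩ := exists_add_of_le hle
    have : b = 0 := by
      rw [← Finsupp.degree_eq_zero_iff]
      rw [map_add, Finsupp.degree_single] at ha
      omega
    rw [this, add_zero, h1]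

lemma X_mem_fil (i : Fin n) : (X i : MvPowerSeries (Fin n) ℂ) ∈ fil n 1 :=
  mem_fil_one.2 (constantCoeff_X i)

lemma sub_C_mem_fil (g : MvPowerSeries (Fin n) ℂ) : g - C (constantCoeff g) ∈ fil n 1 :=
  mem_fil_one.2 (by simp)

/-- A series without terms of degree `≤ k` is a combination of the variables with coefficients
without terms of degree `< k`: each monomial is assigned to one variable dividing it. -/
lemma fil_succ_decomp {k : ℕ} {g : MvPowerSeries (Fin n) ℂ} (hg : g ∈ fil n (k + 1)) :
    ∃ h : Fin n → MvPowerSeries (Fin n) ℂ, (∀ i, h i ∈ fil n k) ∧ g = ∑ i, X i * h i := by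
  classical
  have hne : ∀ a : Fin n →₀ ℕ, a ≠ 0 → ∃ i, a i ≠ 0 := fun a ha => Finsupp.ne_iff.1 ha
  rcases isEmpty_or_nonempty (Fin n) with hn | hn
  · refine ⟨0, fun i => isEmptyElim i, ?_⟩
    ext a
    rw [Subsingleton.elim a 0]
    simpa using mem_fil_one.1 (fil_anti (by omega) hg)
  choose! s hs using hne
  let h : Fin n → MvPowerSeries (Fin n) ℂ := fun i b =>
    if s (b + Finsupp.single i 1) = i then coeff (b + Finsupp.single i 1) g else 0
  have hh : ∀ i b, coeff b (h i) =
    if s (b + Finsupp.single i 1) = i then coeff (b + Finsupp.single i 1) g else 0 :=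
    fun i b => rfl
  refine ⟨h, fun i => mem_fil.2 fun b hb => ?_, ?_⟩
  · rw [hh]
    split_ifs
    · exact mem_fil.1 hg _ (by rw [map_add, Finsupp.degree_single]; omega)
    · rfl
  · ext a
    rw [map_sum]
    have key : ∀ i, coeff a (X i * h i) = if a i ≠ 0 ∧ s a = i then coeff a g else 0 := by
      intro i
      rw [X, coeff_monomial_mul]
      by_cases hi : a i = 0
      · rw [if_neg, if_neg (by tauto)]
        rw [Finsupp.single_le_iff]; omega
      · have hle : Finsupp.single i 1 ≤ a := by rw [Finsupp.single_le_iff]; omega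
        rw [if_pos hle, hh, tsub_add_cancel_of_le hle, one_mul]
        simp [hi]
    simp_rw [key]
    by_cases ha : a = 0
    · subst ha
      simpa using mem_fil_one.1 (fil_anti (by omega) hg)
    · rw [Finset.sum_eq_single (s a)]
      · simp [hs a ha]
      · intro b _ hb
        rw [if_neg]; tauto
      · simp

/-- Completeness of the ring of power series for the order filtration. -/
lemma exists_limit (s : ℕ → MvPowerSeries (Fin n) ℂ) (h : ∀ k, s (k + 1) - s k ∈ fil n k) :
    ∃ y, ∀ k, y - s k ∈ fil n k := by
  have hst : ∀ (a : Fin n →₀ ℕ) k, a.degree < k → coeff a (s k) = coeff a (s (a.degree + 1)) := by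
    intro a k hk
    induction k, hk using Nat.le_induction with
    | base => rfl
    | succ k hk ih =>
      rw [← ih, ← sub_eq_zero, ← map_sub]
      exact mem_fil.1 (h k) a hk
  let y : MvPowerSeries (Fin n) ℂ := fun a => coeff a (s (a.degree + 1))
  have hy : ∀ a, coeff a y = coeff a (s (a.degree + 1)) := fun a => rfl
  refine ⟨y, fun k => mem_fil.2 fun a ha => ?_⟩
  rw [map_sub, hy, hst a k ha, sub_self]

/-! ### Endomorphisms of the ring of power series -/

lemma map_mem_fil (φ : MvPowerSeries (Fin n) ℂ →ₐ[ℂ] MvPowerSeries (Fin n) ℂ)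
    (hφ : ∀ i, φ (X i) ∈ fil n 1) (k : ℕ) {g : MvPowerSeries (Fin n) ℂ} (hg : g ∈ fil n k) :
    φ g ∈ fil n k := by
  induction k generalizing g with
  | zero => exact mem_fil_zero _
  | succ k ih =>
    obtain ⟨h, hh, rfl⟩ := fil_succ_decomp hg
    rw [map_sum]
    refine Submodule.sum_mem _ fun i _ => ?_
    rw [map_mul, add_comm]
    exact mul_mem_fil (hφ i) (ih (hh i))

lemma equiv_X_mem_fil (φ : MvPowerSeries (Fin n) ℂ ≃ₐ[ℂ] MvPowerSeries (Fin n) ℂ) (i : Fin n) :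
    φ (X i) ∈ fil n 1 := by
  rw [mem_fil_one]
  by_contra hc
  have h1 : IsUnit (φ (X i)) := by
    rw [isUnit_iff_constantCoeff]; exact isUnit_iff_ne_zero.2 hc
  have h2 : IsUnit (X i : MvPowerSeries (Fin n) ℂ) := by
    simpa using h1.map φ.symm
  rw [isUnit_iff_constantCoeff, constantCoeff_X] at h2
  exact not_isUnit_zero h2

lemma equiv_mem_fil (φ : MvPowerSeries (Fin n) ℂ ≃ₐ[ℂ] MvPowerSeries (Fin n) ℂ) (k : ℕ)
    {g : MvPowerSeries (Fin n) ℂ} (hg : g ∈ fil n k) : φ g ∈ fil n k :=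
  map_mem_fil (φ : MvPowerSeries (Fin n) ℂ →ₐ[ℂ] MvPowerSeries (Fin n) ℂ) (equiv_X_mem_fil φ) k hg

/-- An endomorphism that is the identity to first order raises the order of `θ g - g`. -/
lemma unipotent_sub_mem (θ : MvPowerSeries (Fin n) ℂ →ₐ[ℂ] MvPowerSeries (Fin n) ℂ)
    (hθ : ∀ i, θ (X i) - X i ∈ fil n 2) (k : ℕ) {g : MvPowerSeries (Fin n) ℂ}
    (hg : g ∈ fil n k) : θ g - g ∈ fil n (k + 1) := by
  have hX : ∀ i, θ (X i) ∈ fil n 1 := fun i => by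
    simpa using (fil n 1).add_mem (fil_anti (by omega) (hθ i)) (X_mem_fil i)
  induction k generalizing g with
  | zero =>
    have h2 := (fil n 1).sub_mem (map_mem_fil θ hX 1 (sub_C_mem_fil g)) (sub_C_mem_fil g)
    have h3 : θ (C (constantCoeff g)) = C (constantCoeff g) := θ.commutes _
    rw [map_sub, h3] at h2
    simpa using h2
  | succ k ih =>
    obtain ⟨h, hh, rfl⟩ := fil_succ_decomp hg
    rw [map_sum, ← Finset.sum_sub_distrib]
    refine Submodule.sum_mem _ fun i _ => ?_
    have : θ (X i * h i) - X i * h i = (θ (X i) - X i) * θ (h i) + X i * (θ (h i) - h i) := by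
      rw [map_mul]; ring
    rw [this]
    refine Submodule.add_mem _ ?_ ?_
    · have := mul_mem_fil (hθ i) (map_mem_fil θ hX k (hh i))
      rwa [show 2 + k = k + 1 + 1 by ring] at this
    · have := mul_mem_fil (X_mem_fil i) (ih (hh i))
      rwa [show 1 + (k + 1) = k + 1 + 1 by ring] at this

lemma unipotent_bijective (θ : MvPowerSeries (Fin n) ℂ →ₐ[ℂ] MvPowerSeries (Fin n) ℂ)
    (hθ : ∀ i, θ (X i) - X i ∈ fil n 2) : Function.Bijective θ := by
  have hX : ∀ i, θ (X i) ∈ fil n 1 := fun i => by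
    simpa using (fil n 1).add_mem (fil_anti (by omega) (hθ i)) (X_mem_fil i)
  constructor
  · rw [injective_iff_map_eq_zero]
    intro g hg
    refine eq_zero_of_fil fun k => ?_
    induction k with
    | zero => exact mem_fil_zero _
    | succ k ih =>
      have := unipotent_sub_mem θ hθ k ih
      rw [hg, zero_sub] at this
      simpa using this
  · intro g
    -- successive approximation of a preimage
    let s : ℕ → MvPowerSeries (Fin n) ℂ := fun k => Nat.rec 0 (fun _ h => h + (g - θ h)) k
    have hs : ∀ k, s (k + 1) = s k + (g - θ (s k)) := fun k => rfl
    have hgs : ∀ k, g - θ (s k) ∈ fil n k := by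
      intro k
      induction k with
      | zero => exact mem_fil_zero _
      | succ k ih =>
        have := unipotent_sub_mem θ hθ k ih
        have e : g - θ (s (k + 1)) = -(θ (g - θ (s k)) - (g - θ (s k))) := by
          rw [hs, map_add]; ring
        rw [e]
        exact Submodule.neg_mem _ this
    obtain ⟨y, hy⟩ := exists_limit s fun k => by rw [hs, add_sub_cancel_left]; exact hgs k
    refine ⟨y, sub_eq_zero.1 (eq_zero_of_fil fun k => ?_)⟩
    have h1 := map_mem_fil θ hX k (hy k)
    have h2 := (fil n k).sub_mem h1 (hgs k)
    rw [map_sub] at h2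
    simpa using h2

/-- The linear part of a power series. -/
def lin (n : ℕ) : MvPowerSeries (Fin n) ℂ →ₗ[ℂ] (Fin n → ℂ) :=
  LinearMap.pi fun i => coeff (R := ℂ) (Finsupp.single i 1)

/-- The linear form with given coefficients. -/
def linForm (n : ℕ) : (Fin n → ℂ) →ₗ[ℂ] MvPowerSeries (Fin n) ℂ :=
  Fintype.linearCombination ℂ (fun i => (X i : MvPowerSeries (Fin n) ℂ))

lemma lin_apply (g : MvPowerSeries (Fin n) ℂ) (i : Fin n) :
    lin n g i = coeff (Finsupp.single i 1) g := rfl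

lemma linForm_apply (v : Fin n → ℂ) : linForm n v = ∑ i, v i • (X i : MvPowerSeries (Fin n) ℂ) :=
  rfl

lemma lin_eq_zero {g : MvPowerSeries (Fin n) ℂ} (hg : g ∈ fil n 2) : lin n g = 0 := by
  ext i
  exact mem_fil.1 hg _ (by simp)

lemma lin_X (i : Fin n) : lin n (X i) = Pi.single i 1 := by
  classical
  ext j
  rw [lin_apply, coeff_X, Pi.single_apply]
  simp [Finsupp.single_left_inj]

lemma lin_linForm (v : Fin n → ℂ) : lin n (linForm n v) = v := by
  ext j
  rw [linForm_apply, map_sum]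
  simp [lin_X, Pi.single_apply]

lemma linForm_mem (v : Fin n → ℂ) : linForm n v ∈ fil n 1 := by
  rw [linForm_apply]
  exact Submodule.sum_mem _ fun i _ => Submodule.smul_mem _ _ (X_mem_fil i)

lemma sub_linForm_mem {g : MvPowerSeries (Fin n) ℂ} (hg : g ∈ fil n 1) :
    g - linForm n (lin n g) ∈ fil n 2 := by
  refine mem_fil_two ?_ fun i => ?_
  · exact mem_fil_one.1 ((fil n 1).sub_mem hg (linForm_mem _))
  · rw [← lin_apply, map_sub, lin_linForm, sub_self, Pi.zero_apply]

lemma mem_fil_two_of_lin {g : MvPowerSeries (Fin n) ℂ} (hg : g ∈ fil n 1) (h : lin n g = 0) :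
    g ∈ fil n 2 := by
  simpa [h] using sub_linForm_mem hg

/-- The endomorphism substituting `y i` for the variable `X i`. -/
lemma exists_subst (y : Fin n → MvPowerSeries (Fin n) ℂ) (hy : ∀ i, y i ∈ fil n 1) :
    ∃ φ : MvPowerSeries (Fin n) ℂ →ₐ[ℂ] MvPowerSeries (Fin n) ℂ, ∀ i, φ (X i) = y i :=
  ⟨substAlgHom (hasSubst_of_constantCoeff_zero fun i => mem_fil_one.1 (hy i)), fun i =>
    substAlgHom_X _ i⟩

/-- Formal inverse function theorem: substitution of series without constant term and with
invertible jacobian matrix at the origin is an automorphism. -/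
lemma exists_equiv (y : Fin n → MvPowerSeries (Fin n) ℂ) (hy : ∀ i, y i ∈ fil n 1)
    (hdet : IsUnit (Matrix.of fun i => lin n (y i)).det) :
    ∃ φ : MvPowerSeries (Fin n) ℂ ≃ₐ[ℂ] MvPowerSeries (Fin n) ℂ, ∀ i, φ (X i) = y i := by
  classical
  set P : Matrix (Fin n) (Fin n) ℂ := Matrix.of fun i => lin n (y i) with hP
  obtain ⟨φ, hφ⟩ := exists_subst y hy
  obtain ⟨ψ, hψ⟩ := exists_subst (fun i => linForm n (P⁻¹ i)) fun i => linForm_mem _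
  have hφ1 : ∀ i, φ (X i) ∈ fil n 1 := fun i => by rw [hφ]; exact hy i
  have hψ1 : ∀ i, ψ (X i) ∈ fil n 1 := fun i => by rw [hψ]; exact linForm_mem _
  have hlin : ∀ (A B : Matrix (Fin n) (Fin n) ℂ) (χ : MvPowerSeries (Fin n) ℂ →ₐ[ℂ]
      MvPowerSeries (Fin n) ℂ), A * B = 1 → (∀ i, lin n (χ (X i)) = B i) → ∀ i,
      lin n (χ (linForm n (A i))) = lin n (X i) := by
    intro A B χ hAB hχ i
    rw [linForm_apply, map_sum, map_sum, lin_X]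
    ext j
    have := congrFun (congrFun hAB i) j
    rw [Matrix.mul_apply, Matrix.one_apply] at this
    simp only [map_smul, hχ, Finset.sum_apply, Pi.smul_apply, smul_eq_mul, this, Pi.single_apply,
      eq_comm]
  have b1 : Function.Bijective (φ.comp ψ) := by
    refine unipotent_bijective _ fun i => mem_fil_two_of_lin ?_ ?_
    · exact (fil n 1).sub_mem (map_mem_fil φ hφ1 1 (hψ1 i)) (X_mem_fil i)
    · rw [map_sub, AlgHom.comp_apply, hψ, hlin _ P φ (Matrix.nonsing_inv_mul _ hdet), sub_self]
      intro i; rw [hφ]; rfl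
  have b2 : Function.Bijective (ψ.comp φ) := by
    refine unipotent_bijective _ fun i => mem_fil_two_of_lin ?_ ?_
    · exact (fil n 1).sub_mem (map_mem_fil ψ hψ1 1 (hφ1 i)) (X_mem_fil i)
    · rw [AlgHom.comp_apply, hφ]
      have h1 := lin_eq_zero (map_mem_fil ψ hψ1 2 (sub_linForm_mem (hy i)))
      have h2 := hlin P P⁻¹ ψ (Matrix.mul_nonsing_inv _ hdet)
        (fun i => by rw [hψ, lin_linForm]) i
      have h3 : P i = lin n (y i) := rfl
      rw [map_sub, map_sub, sub_eq_zero, ← h3, h2] at h1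
      rw [map_sub, h1, sub_self]
  have hb : Function.Bijective φ := by
    refine ⟨?_, ?_⟩
    · have := b2.1
      rw [AlgHom.coe_comp] at this
      exact this.of_comp
    · have := b1.2
      rw [AlgHom.coe_comp] at this
      exact this.of_comp
  exact ⟨AlgEquiv.ofBijective φ hb, fun i => by simp [hφ]⟩

/-! ### Derivations -/

/-- A vector field vanishing at the origin does not lower the order. -/
lemma derivation_mem_fil (D : Derivation ℂ (MvPowerSeries (Fin n) ℂ) (MvPowerSeries (Fin n) ℂ))
    (hD : ∀ i, D (X i) ∈ fil n 1) (k : ℕ) {g : MvPowerSeries (Fin n) ℂ} (hg : g ∈ fil n k) :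
    D g ∈ fil n k := by
  induction k generalizing g with
  | zero => exact mem_fil_zero _
  | succ k ih =>
    obtain ⟨h, hh, rfl⟩ := fil_succ_decomp hg
    rw [map_sum]
    refine Submodule.sum_mem _ fun i _ => ?_
    rw [Derivation.leibniz, smul_eq_mul, smul_eq_mul]
    refine Submodule.add_mem _ ?_ (mul_mem_fil (hh i) (hD i))
    rw [add_comm]
    exact mul_mem_fil (X_mem_fil i) (ih (hh i))

lemma derivation_C (D : Derivation ℂ (MvPowerSeries (Fin n) ℂ) (MvPowerSeries (Fin n) ℂ)) (c : ℂ) :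
    D (C c) = 0 :=
  D.map_algebraMap c

lemma derivation_eq_zero
    (D : Derivation ℂ (MvPowerSeries (Fin n) ℂ) (MvPowerSeries (Fin n) ℂ))
    (hD : ∀ i, D (X i) = 0) (g : MvPowerSeries (Fin n) ℂ) : D g = 0 := by
  refine eq_zero_of_fil fun k => ?_
  induction k generalizing g with
  | zero => exact mem_fil_zero _
  | succ k ih =>
    obtain ⟨h, -, hh⟩ := fil_succ_decomp (sub_C_mem_fil g)
    have : D g = ∑ i, X i * D (h i) := by
      rw [← sub_zero (D g), ← derivation_C D (constantCoeff g), ← map_sub, hh, map_sum]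
      simp [hD]
    rw [this]
    refine Submodule.sum_mem _ fun i _ => ?_
    rw [add_comm]
    exact mul_mem_fil (X_mem_fil i) (ih _)

lemma derivation_sum_apply {ι : Type*} (s : Finset ι)
    (D : ι → Derivation ℂ (MvPowerSeries (Fin n) ℂ) (MvPowerSeries (Fin n) ℂ))
    (g : MvPowerSeries (Fin n) ℂ) : (∑ i ∈ s, D i) g = ∑ i ∈ s, D i g := by
  classical
  induction s using Finset.induction_on with
  | empty => simp
  | insert a s ha ih => rw [Finset.sum_insert ha, Finset.sum_insert ha, Derivation.add_apply, ih]

/-- Every derivation of the ring of power series is a formal vector field. -/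
lemma derivation_eq (D : Derivation ℂ (MvPowerSeries (Fin n) ℂ) (MvPowerSeries (Fin n) ℂ))
    (g : MvPowerSeries (Fin n) ℂ) : D g = ∑ i, D (X i) * pderiv ℂ i g := by
  classical
  have := derivation_eq_zero (D - ∑ i, D (X i) • pderiv ℂ i) (fun j => by
    rw [Derivation.sub_apply, derivation_sum_apply]
    simp [pderiv_X, Pi.single_apply]) g
  rw [Derivation.sub_apply, derivation_sum_apply, sub_eq_zero] at this
  simpa using this

lemma pderiv_comm (i j : Fin n) (g : MvPowerSeries (Fin n) ℂ) :
    pderiv ℂ i (pderiv ℂ j g) = pderiv ℂ j (pderiv ℂ i g) := by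
  classical
  ext a
  simp only [coeff_pderiv, Finsupp.add_apply, Finsupp.single_apply]
  rw [add_right_comm]
  by_cases h : i = j
  · subst h; ring
  · simp [h, Ne.symm h]; ring

/-- The derivation `φ⁻¹ ∘ D ∘ φ`. -/
def conj (φ : MvPowerSeries (Fin n) ℂ ≃ₐ[ℂ] MvPowerSeries (Fin n) ℂ)
    (D : Derivation ℂ (MvPowerSeries (Fin n) ℂ) (MvPowerSeries (Fin n) ℂ)) :
    Derivation ℂ (MvPowerSeries (Fin n) ℂ) (MvPowerSeries (Fin n) ℂ) :=
  Derivation.mk' (φ.symm.toLinearMap ∘ₗ D.toLinearMap ∘ₗ φ.toLinearMap) fun g h => by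
    simp

lemma conj_apply (φ : MvPowerSeries (Fin n) ℂ ≃ₐ[ℂ] MvPowerSeries (Fin n) ℂ)
    (D : Derivation ℂ (MvPowerSeries (Fin n) ℂ) (MvPowerSeries (Fin n) ℂ))
    (g : MvPowerSeries (Fin n) ℂ) : conj φ D g = φ.symm (D (φ g)) := rfl

end MvPowerSeries.Saito

namespace MvPowerSeries.Saito

variable {n : ℕ}

/-! ### Generalized eigenvectors of a vector field vanishing at the origin -/

/-- The operator `D - μ`. -/
def shift (D : Derivation ℂ (MvPowerSeries (Fin n) ℂ) (MvPowerSeries (Fin n) ℂ)) (μ : ℂ) :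
    Module.End ℂ (MvPowerSeries (Fin n) ℂ) :=
  D.toLinearMap - μ • 1

/-- `g` is a generalized eigenvector of `D` for the eigenvalue `μ` modulo every power of the
maximal ideal. The exponent may depend on the power, so this is weaker than
`g ∈ Module.End.maxGenEigenspace D μ`. -/
def IsGen (D : Derivation ℂ (MvPowerSeries (Fin n) ℂ) (MvPowerSeries (Fin n) ℂ)) (μ : ℂ)
    (g : MvPowerSeries (Fin n) ℂ) : Prop :=
  ∀ k, ∃ N, (shift D μ ^ N) g ∈ fil n k

variable {D : Derivation ℂ (MvPowerSeries (Fin n) ℂ) (MvPowerSeries (Fin n) ℂ)}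

lemma shift_apply (μ : ℂ) (g : MvPowerSeries (Fin n) ℂ) : shift D μ g = D g - μ • g := rfl

lemma shift_pow_succ (μ : ℂ) (N : ℕ) (g : MvPowerSeries (Fin n) ℂ) :
    (shift D μ ^ (N + 1)) g = (shift D μ ^ N) (shift D μ g) := by
  rw [pow_succ, Module.End.mul_apply]

lemma shift_mem_fil (hD : ∀ i, D (X i) ∈ fil n 1) (μ : ℂ) {k : ℕ} {g : MvPowerSeries (Fin n) ℂ}
    (hg : g ∈ fil n k) : shift D μ g ∈ fil n k :=
  Submodule.sub_mem _ (derivation_mem_fil D hD k hg) (Submodule.smul_mem _ _ hg)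

lemma shift_pow_mem_fil (hD : ∀ i, D (X i) ∈ fil n 1) (μ : ℂ) {k : ℕ} (N : ℕ)
    {g : MvPowerSeries (Fin n) ℂ} (hg : g ∈ fil n k) : (shift D μ ^ N) g ∈ fil n k := by
  induction N generalizing g with
  | zero => simpa using hg
  | succ N ih => rw [shift_pow_succ]; exact ih (shift_mem_fil hD μ hg)

lemma shift_mul (μ ν : ℂ) (g h : MvPowerSeries (Fin n) ℂ) :
    shift D (μ + ν) (g * h) = shift D μ g * h + g * shift D ν h := by
  simp only [shift_apply, Derivation.leibniz, smul_eq_mul, smul_eq_C_mul, map_add]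
  ring

lemma shift_pow_mul_mem (hD : ∀ i, D (X i) ∈ fil n 1) (μ ν : ℂ) {k : ℕ} (N : ℕ) :
    ∀ (a b : ℕ) (g h : MvPowerSeries (Fin n) ℂ), a + b = N → (shift D μ ^ a) g ∈ fil n k →
      (shift D ν ^ b) h ∈ fil n k → (shift D (μ + ν) ^ N) (g * h) ∈ fil n k := by
  induction N with
  | zero =>
    intro a b g h hab hg hh
    obtain ⟨rfl, rfl⟩ : a = 0 ∧ b = 0 := by omega
    simpa using mul_mem_fil_left g (by simpa using hh)
  | succ N ih =>
    intro a b g h hab hg hh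
    rcases a with _ | a
    · refine shift_pow_mem_fil hD _ _ ?_
      rw [mul_comm]
      exact mul_mem_fil_left h (by simpa using hg)
    rcases b with _ | b
    · exact shift_pow_mem_fil hD _ _ (mul_mem_fil_left g (by simpa using hh))
    rw [shift_pow_succ, shift_mul, map_add]
    refine Submodule.add_mem _ ?_ ?_
    · exact ih a (b + 1) _ _ (by omega) (by rwa [shift_pow_succ] at hg) hh
    · exact ih (a + 1) b _ _ (by omega) hg (by rwa [shift_pow_succ] at hh)

lemma IsGen.mul (hD : ∀ i, D (X i) ∈ fil n 1) {μ ν : ℂ} {g h : MvPowerSeries (Fin n) ℂ}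
    (hg : IsGen D μ g) (hh : IsGen D ν h) : IsGen D (μ + ν) (g * h) := fun k => by
  obtain ⟨a, ha⟩ := hg k
  obtain ⟨b, hb⟩ := hh k
  exact ⟨a + b, shift_pow_mul_mem hD μ ν _ a b g h rfl ha hb⟩

lemma isGen_C (c : ℂ) : IsGen D 0 (C c) := fun k =>
  ⟨1, by simp [shift_apply, derivation_C]⟩

lemma IsGen.pow (hD : ∀ i, D (X i) ∈ fil n 1) {μ : ℂ} {g : MvPowerSeries (Fin n) ℂ}
    (hg : IsGen D μ g) (m : ℕ) : IsGen D (m * μ) (g ^ m) := by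
  induction m with
  | zero => simpa using isGen_C (D := D) 1
  | succ m ih =>
    have := ih.mul hD hg
    rwa [← pow_succ, ← add_one_mul, ← Nat.cast_succ] at this

lemma IsGen.prod (hD : ∀ i, D (X i) ∈ fil n 1) {ι : Type*} (s : Finset ι) (μ : ι → ℂ)
    (g : ι → MvPowerSeries (Fin n) ℂ) (hg : ∀ i, IsGen D (μ i) (g i)) :
    IsGen D (∑ i ∈ s, μ i) (∏ i ∈ s, g i) := by
  classical
  induction s using Finset.induction_on with
  | empty => simpa using isGen_C (D := D) 1
  | insert a s ha ih =>
    rw [Finset.sum_insert ha, Finset.prod_insert ha]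
    exact (hg a).mul hD ih

lemma monomial_eq_prod (a : Fin n →₀ ℕ) (c : ℂ) :
    (monomial a c : MvPowerSeries (Fin n) ℂ) = C c * ∏ i, X i ^ a i := by
  have h1 : (monomial a c : MvPowerSeries (Fin n) ℂ) = C c * monomial a 1 := by
    rw [← smul_eq_C_mul, ← map_smul, smul_eq_mul, mul_one]
  rw [h1, monomial_one_eq, Finsupp.prod_fintype _ _ (by simp)]

lemma isGen_monomial (hD : ∀ i, D (X i) ∈ fil n 1) {lam : Fin n → ℂ}
    (hX : ∀ i, IsGen D (lam i) (X i)) (a : Fin n →₀ ℕ) (c : ℂ) :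
    IsGen D (∑ i, a i * lam i) (monomial a c) := by
  rw [monomial_eq_prod, ← zero_add (∑ i, (a i : ℂ) * lam i)]
  exact (isGen_C c).mul hD (IsGen.prod hD _ _ _ fun i => (hX i).pow hD _)

/-- If the variables are generalized eigenvectors of `D` with eigenvalues `lam i`, then a
generalized eigenvector with eigenvalue `μ` (modulo terms of degree `≥ k`) involves, in degrees
`< k`, only monomials of weight `μ`. This is the independence of generalized eigenspaces in the
finite-dimensional quotient. -/
lemma weight_eq_of_coeff_ne_zero (hD : ∀ i, D (X i) ∈ fil n 1) {lam : Fin n → ℂ}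
    (hX : ∀ i, IsGen D (lam i) (X i)) {μ : ℂ} {N k : ℕ} {h : MvPowerSeries (Fin n) ℂ}
    (hh : (shift D μ ^ N) h ∈ fil n k) {a : Fin n →₀ ℕ} (ha : a.degree < k)
    (hne : coeff a h ≠ 0) : ∑ i, a i * lam i = μ := by
  classical
  by_contra hwt
  have hmap : fil n k ≤ (fil n k).comap D.toLinearMap := fun g hg => derivation_mem_fil D hD k hg
  set E : Module.End ℂ (MvPowerSeries (Fin n) ℂ ⧸ fil n k) := (fil n k).mapQ _ _ hmap with hE
  have hEq : ∀ (ν : ℂ) (M : ℕ) (g : MvPowerSeries (Fin n) ℂ),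
      ((E - ν • 1) ^ M) ((fil n k).mkQ g) = (fil n k).mkQ ((shift D ν ^ M) g) := by
    intro ν M
    induction M with
    | zero => intro g; simp
    | succ M ih =>
      intro g
      rw [shift_pow_succ, ← ih, pow_succ, Module.End.mul_apply]
      congr 1
  have hgen : ∀ (ν : ℂ) (M : ℕ) (g : MvPowerSeries (Fin n) ℂ), (shift D ν ^ M) g ∈ fil n k →
      (fil n k).mkQ g ∈ E.maxGenEigenspace ν := by
    intro ν M g hg
    rw [Module.End.mem_maxGenEigenspace]
    exact ⟨M, by rw [hEq]; simpa using hg⟩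
  let S : Finset (Fin n →₀ ℕ) := (Finsupp.finite_of_degree_lt (σ := Fin n) k).toFinset
  have hS : ∀ b, b ∈ S ↔ b.degree < k := fun b => by simp [S]
  let wt : (Fin n →₀ ℕ) → ℂ := fun b => ∑ i, b i * lam i
  let mon : (Fin n →₀ ℕ) → MvPowerSeries (Fin n) ℂ := fun b => monomial b (coeff b h)
  have hmon : ∀ b, (fil n k).mkQ (mon b) ∈ E.maxGenEigenspace (wt b) := fun b => by
    obtain ⟨M, hM⟩ := isGen_monomial hD hX b (coeff b h) k
    exact hgen _ M _ hM
  have hcoeff : ∀ (S' : Finset (Fin n →₀ ℕ)) (b : Fin n →₀ ℕ),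
      coeff b (∑ c ∈ S', mon c) = if b ∈ S' then coeff b h else 0 := by
    intro S' b
    rw [map_sum]
    simp [mon, coeff_monomial]
  have hsum : h - ∑ b ∈ S, mon b ∈ fil n k := mem_fil.2 fun b hb => by
    rw [map_sub, hcoeff, if_pos ((hS b).2 hb), sub_self]
  have hq : (fil n k).mkQ h = ∑ b ∈ S, (fil n k).mkQ (mon b) := by
    rw [← map_sum, ← sub_eq_zero, ← map_sub]
    exact (Submodule.Quotient.mk_eq_zero _).2 hsum
  set w := ∑ b ∈ S with wt b ≠ μ, (fil n k).mkQ (mon b) with hw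
  have hw1 : w ∈ E.maxGenEigenspace μ := by
    have : w = (fil n k).mkQ h - ∑ b ∈ S with wt b = μ, (fil n k).mkQ (mon b) := by
      rw [hq, ← Finset.sum_filter_add_sum_filter_not S (fun b => wt b = μ)]
      abel
    rw [this]
    refine Submodule.sub_mem _ (hgen μ N h hh) (Submodule.sum_mem _ fun b hb => ?_)
    rw [← (Finset.mem_filter.1 hb).2]
    exact hmon b
  have hw2 : w ∈ ⨆ ν ≠ μ, E.maxGenEigenspace ν :=
    Submodule.sum_mem _ fun b hb =>
      (le_iSup₂_of_le (wt b) (Finset.mem_filter.1 hb).2 le_rfl :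
        E.maxGenEigenspace (wt b) ≤ ⨆ ν ≠ μ, E.maxGenEigenspace ν) (hmon b)
  have hw0 : w = 0 := by
    have := (Module.End.independent_maxGenEigenspace E) μ
    exact (Submodule.disjoint_def.1 this) w hw1 hw2
  rw [hw, ← map_sum] at hw0
  have hmem : (∑ b ∈ S with wt b ≠ μ, mon b) ∈ fil n k :=
    (Submodule.Quotient.mk_eq_zero _).1 hw0
  have := mem_fil.1 hmem a ha
  rw [hcoeff, if_pos] at this
  · exact hne this
  · exact Finset.mem_filter.2 ⟨(hS a).2 ha, hwt⟩

/-- A generalized eigenvector modulo terms of degree `≥ k` can be corrected by terms of degree `k`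
to one modulo terms of degree `≥ k + 1`. -/
lemma lift_step (hD : ∀ i, D (X i) ∈ fil n 1) (μ : ℂ) {k : ℕ} {y : MvPowerSeries (Fin n) ℂ}
    (hy : ∃ N, (shift D μ ^ N) y ∈ fil n k) :
    ∃ y', y' - y ∈ fil n k ∧ ∃ N, (shift D μ ^ N) y' ∈ fil n (k + 1) := by
  obtain ⟨N, hN⟩ := hy
  -- The images of `fil n k` under the powers of `D - μ` stabilize in the quotient.
  let A : ℕ →o (Submodule ℂ (MvPowerSeries (Fin n) ℂ ⧸ fil n (k + 1)))ᵒᵈ :=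
    { toFun := fun M => OrderDual.toDual
        ((fil n k).map ((fil n (k + 1)).mkQ ∘ₗ (shift D μ ^ M)))
      monotone' := by
        refine monotone_nat_of_le_succ fun M => ?_
        rw [OrderDual.toDual_le_toDual]
        rintro _ ⟨g, hg, rfl⟩
        exact ⟨shift D μ g, shift_mem_fil hD μ hg, by
          simp only [LinearMap.comp_apply, shift_pow_succ]⟩ }
  obtain ⟨M, hM⟩ := IsArtinian.monotone_stabilizes A
  have h1 := hM (M + N) (by omega)
  have h2 : (fil n (k + 1)).mkQ ((shift D μ ^ M) ((shift D μ ^ N) y)) ∈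
      (fil n k).map ((fil n (k + 1)).mkQ ∘ₗ (shift D μ ^ (M + N))) := by
    have : (fil n k).map ((fil n (k + 1)).mkQ ∘ₗ (shift D μ ^ M)) =
      (fil n k).map ((fil n (k + 1)).mkQ ∘ₗ (shift D μ ^ (M + N))) := h1
    rw [← this]
    exact ⟨_, hN, rfl⟩
  obtain ⟨h, hh, he⟩ := h2
  refine ⟨y - h, by simpa using hh, M + N, ?_⟩
  rw [LinearMap.comp_apply, ← Module.End.mul_apply, ← pow_add, eq_comm, ← sub_eq_zero, ← map_sub,
    ← map_sub] at he
  exact (Submodule.Quotient.mk_eq_zero _).1 he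

lemma lift_gen (hD : ∀ i, D (X i) ∈ fil n 1) (μ : ℂ) {y : MvPowerSeries (Fin n) ℂ}
    (hy : ∃ N, (shift D μ ^ N) y ∈ fil n 2) : ∃ y', y' - y ∈ fil n 2 ∧ IsGen D μ y' := by
  choose! F hF using fun (k : ℕ) (y : MvPowerSeries (Fin n) ℂ)
    (hy : ∃ N, (shift D μ ^ N) y ∈ fil n k) => lift_step hD μ hy
  let s : ℕ → MvPowerSeries (Fin n) ℂ := fun k => Nat.rec y (fun k z => F (k + 2) z) k
  have hs : ∀ k, s (k + 1) = F (k + 2) (s k) := fun k => rfl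
  have hN : ∀ k, ∃ N, (shift D μ ^ N) (s k) ∈ fil n (k + 2) := by
    intro k
    induction k with
    | zero => exact hy
    | succ k ih => exact (hF _ _ ih).2
  have hd : ∀ k, s (k + 1) - s k ∈ fil n (k + 2) := fun k => (hF _ _ (hN k)).1
  obtain ⟨z, hz⟩ := exists_limit s fun k => fil_anti (by omega) (hd k)
  have hz2 : ∀ k, s k - y ∈ fil n 2 := by
    intro k
    induction k with
    | zero => simp [s]
    | succ k ih =>
      have := (fil n 2).add_mem (fil_anti (by omega) (hd k)) ih
      simpa using this
  refine ⟨z, ?_, fun k => ?_⟩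
  · have := (fil n 2).add_mem (hz 2) (hz2 2)
    simpa using this
  · obtain ⟨N, hN⟩ := hN k
    refine ⟨N, ?_⟩
    have := (fil n k).add_mem (shift_pow_mem_fil hD μ N (hz k)) (fil_anti (by omega) hN)
    rwa [← map_add, sub_add_cancel] at this

lemma exists_eigenbasis (A : Module.End ℂ (Fin n → ℂ)) :
    ∃ (b : Module.Basis (Fin n) ℂ (Fin n → ℂ)) (lam : Fin n → ℂ),
      ∀ i, b i ∈ A.maxGenEigenspace (lam i) := by
  have hs : ⊤ ≤ Submodule.span ℂ (⋃ μ, (A.maxGenEigenspace μ : Set (Fin n → ℂ))) := by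
    rw [← Submodule.iSup_eq_span, Module.End.iSup_maxGenEigenspace_eq_top]
  let b := Module.Basis.ofSpan hs
  have hb : ∀ i, b i ∈ ⋃ μ, (A.maxGenEigenspace μ : Set (Fin n → ℂ)) := fun i =>
    Module.Basis.ofSpan_subset hs ⟨i, rfl⟩
  let e := b.indexEquiv (Pi.basisFun ℂ (Fin n))
  have : ∀ i, ∃ μ, b.reindex e i ∈ A.maxGenEigenspace μ := fun i => by
    rw [Module.Basis.reindex_apply]
    simpa using hb (e.symm i)
  choose lam hlam using this
  exact ⟨b.reindex e, lam, hlam⟩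

/-- There are formal coordinates which are generalized eigenvectors of a given vector field
vanishing at the origin. -/
lemma exists_eigen_coordinates (hD : ∀ i, D (X i) ∈ fil n 1) :
    ∃ (φ : MvPowerSeries (Fin n) ℂ ≃ₐ[ℂ] MvPowerSeries (Fin n) ℂ) (lam : Fin n → ℂ),
      ∀ i, IsGen D (lam i) (φ (X i)) := by
  obtain ⟨b, lam, hb⟩ := exists_eigenbasis (lin n ∘ₗ D.toLinearMap ∘ₗ linForm n)
  set A : Module.End ℂ (Fin n → ℂ) := lin n ∘ₗ D.toLinearMap ∘ₗ linForm n with hA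
  have hAl : ∀ g ∈ fil n 1, lin n (D g) = A (lin n g) := by
    intro g hg
    have := lin_eq_zero (derivation_mem_fil D hD 2 (sub_linForm_mem hg))
    rw [map_sub, map_sub, sub_eq_zero] at this
    exact this
  have hpow : ∀ (μ : ℂ) (N : ℕ), ∀ g ∈ fil n 1,
      lin n ((shift D μ ^ N) g) = ((A - μ • 1) ^ N) (lin n g) := by
    intro μ N
    induction N with
    | zero => intro g _; simp
    | succ N ih =>
      intro g hg
      rw [shift_pow_succ, ih _ (shift_mem_fil hD μ hg), pow_succ, Module.End.mul_apply,
        shift_apply, map_sub, hAl g hg, map_smul]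
      rfl
  have hlift : ∀ i, ∃ y, y - linForm n (b i) ∈ fil n 2 ∧ IsGen D (lam i) y := fun i => by
    refine lift_gen hD (lam i) ?_
    obtain ⟨N, hN⟩ := (Module.End.mem_maxGenEigenspace _ _ _).1 (hb i)
    refine ⟨N, mem_fil_two_of_lin (shift_pow_mem_fil hD _ N (linForm_mem _)) ?_⟩
    rw [hpow _ _ _ (linForm_mem _), lin_linForm, hN]
  choose y hy1 hy2 using hlift
  have hyl : ∀ i, lin n (y i) = b i := fun i => by
    have := lin_eq_zero (hy1 i)
    rwa [map_sub, lin_linForm, sub_eq_zero] at this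
  obtain ⟨φ, hφ⟩ := exists_equiv y
    (fun i => by simpa using (fil n 1).add_mem (fil_anti (by omega) (hy1 i)) (linForm_mem (b i)))
    (by
      rw [← Matrix.isUnit_iff_isUnit_det, ← Matrix.linearIndependent_rows_iff_isUnit]
      have : (Matrix.of fun i => lin n (y i)).row = b := by
        ext i j
        simp [Matrix.row, hyl]
      rw [this]
      exact b.linearIndependent)
  exact ⟨φ, lam, fun i => by rw [hφ]; exact hy2 i⟩

end MvPowerSeries.Saito

namespace MvPowerSeries.Saito

variable {n : ℕ}

/-! ### The vector field attached to a series in its jacobian ideal -/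

/-- The ideal generated by the partial derivatives of a power series. -/
def jac (F : MvPowerSeries (Fin n) ℂ) : Ideal (MvPowerSeries (Fin n) ℂ) :=
  Ideal.span (Set.range fun i => pderiv ℂ i F)

lemma pderiv_mem_jac (F : MvPowerSeries (Fin n) ℂ) (i : Fin n) : pderiv ℂ i F ∈ jac F :=
  Ideal.subset_span ⟨i, rfl⟩

lemma constantCoeff_pderiv (i : Fin n) (g : MvPowerSeries (Fin n) ℂ) :
    constantCoeff (pderiv ℂ i g) = lin n g i := by
  rw [← coeff_zero_eq_constantCoeff_apply, coeff_pderiv, lin_apply]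
  simp

lemma exists_pow_mem (J : Ideal (MvPowerSeries (Fin n) ℂ))
    [FiniteDimensional ℂ (MvPowerSeries (Fin n) ℂ ⧸ J)] {y : MvPowerSeries (Fin n) ℂ}
    (hy : y ∈ fil n 1) : ∃ K, y ^ K ∈ J := by
  have : IsArtinian (MvPowerSeries (Fin n) ℂ ⧸ J) (MvPowerSeries (Fin n) ℂ ⧸ J) :=
    isArtinian_of_tower ℂ inferInstance
  obtain ⟨K, z, hz⟩ := IsArtinian.exists_pow_succ_smul_dvd (Ideal.Quotient.mk J y)
    (1 : MvPowerSeries (Fin n) ℂ ⧸ J)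
  obtain ⟨z, rfl⟩ := Ideal.Quotient.mk_surjective z
  refine ⟨K, ?_⟩
  rw [smul_eq_mul, smul_eq_mul, mul_one, ← map_pow, ← map_pow, ← map_mul, Ideal.Quotient.eq] at hz
  have hu : IsUnit (y * z - 1) := by
    rw [isUnit_iff_constantCoeff, map_sub, map_mul, mem_fil_one.1 hy]
    simp
  rw [← Ideal.mul_unit_mem_iff_mem J hu]
  convert hz using 1
  rw [Nat.succ_eq_add_one]; ring

variable {F : MvPowerSeries (Fin n) ℂ}
  {D : Derivation ℂ (MvPowerSeries (Fin n) ℂ) (MvPowerSeries (Fin n) ℂ)}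

lemma derivation_pderiv (hDF : D F = F) (i : Fin n) :
    pderiv ℂ i F = ∑ j, pderiv ℂ i (D (X j)) * pderiv ℂ j F + D (pderiv ℂ i F) := by
  conv_lhs => rw [← hDF, derivation_eq D F]
  rw [derivation_eq D (pderiv ℂ i F), map_sum, ← Finset.sum_add_distrib]
  refine Finset.sum_congr rfl fun j _ => ?_
  rw [Derivation.leibniz, pderiv_comm i j, smul_eq_mul, smul_eq_mul]
  ring

lemma derivation_jac (hDF : D F = F) {g : MvPowerSeries (Fin n) ℂ} (hg : g ∈ jac F) :
    D g ∈ jac F := by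
  induction hg using Submodule.span_induction with
  | mem x hx =>
    obtain ⟨i, rfl⟩ := hx
    have : D (pderiv ℂ i F) =
        pderiv ℂ i F - ∑ j, pderiv ℂ i (D (X j)) * pderiv ℂ j F :=
      eq_sub_of_add_eq' (derivation_pderiv hDF i).symm
    simp only [this]
    exact Ideal.sub_mem _ (pderiv_mem_jac F i)
      (Ideal.sum_mem _ fun j _ => Ideal.mul_mem_left _ _ (pderiv_mem_jac F j))
  | zero => simp
  | add x y _ _ hx hy => rw [map_add]; exact Ideal.add_mem _ hx hy
  | smul a x hx ih =>
    rw [smul_eq_mul, Derivation.leibniz, smul_eq_mul, smul_eq_mul]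
    exact Ideal.add_mem _ (Ideal.mul_mem_left _ _ ih) (Ideal.mul_mem_right _ _ hx)

/-- If `D F = F`, then `D` preserves the jacobian ideal, which is primary to the maximal ideal.
In characteristic zero a derivation preserves the radical of an ideal it preserves, so `D`
vanishes at the origin. -/
lemma derivation_X_mem (hDF : D F = F) [FiniteDimensional ℂ (MvPowerSeries (Fin n) ℂ ⧸ jac F)]
    (hF : ∀ i, pderiv ℂ i F ∈ fil n 1) (i : Fin n) : D (X i) ∈ fil n 1 := by
  classical
  have hJ : ∀ g ∈ jac F, g ∈ fil n 1 := by
    intro g hg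
    induction hg using Submodule.span_induction with
    | mem x hx => obtain ⟨i, rfl⟩ := hx; exact hF i
    | zero => exact Submodule.zero_mem _
    | add x y _ _ hx hy => exact Submodule.add_mem _ hx hy
    | smul a x hx ih => exact mul_mem_fil_left a ih
  have hex := exists_pow_mem (jac F) (X_mem_fil i)
  have hspec := Nat.find_spec hex
  have hmin := fun m => Nat.find_min hex (m := m)
  rcases hK : Nat.find hex with _ | K
  · rw [hK, pow_zero] at hspec
    have := mem_fil_one.1 (hJ _ hspec)
    simp at this
  · rw [hK] at hspec hmin
    by_contra hc
    have hu : IsUnit (D (X i)) := by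
      rw [isUnit_iff_constantCoeff, isUnit_iff_ne_zero]
      exact fun h => hc (mem_fil_one.2 h)
    have h1 := derivation_jac hDF hspec
    rw [Derivation.leibniz_pow, Nat.add_sub_cancel, smul_eq_mul, ← Nat.cast_smul_eq_nsmul ℂ,
      smul_eq_C_mul] at h1
    have hu2 : IsUnit (C ((K + 1 : ℕ) : ℂ) : MvPowerSeries (Fin n) ℂ) := by
      rw [isUnit_iff_constantCoeff, constantCoeff_C, isUnit_iff_ne_zero]
      exact Nat.cast_ne_zero.2 (Nat.succ_ne_zero K)
    rw [Ideal.unit_mul_mem_iff_mem _ hu2, Ideal.mul_unit_mem_iff_mem _ hu] at h1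
    exact hmin K (Nat.lt_succ_self K) h1

/-! ### Normalizing the linear part of the vector field -/

lemma exists_generalized_inverse (H : Matrix (Fin n) (Fin n) ℂ) :
    ∃ G : Matrix (Fin n) (Fin n) ℂ, H * G * H = H := by
  let f := Matrix.toLin' H
  obtain ⟨s, hs⟩ := f.rangeRestrict.exists_rightInverse_of_surjective f.range_rangeRestrict
  obtain ⟨p, hp⟩ := (LinearMap.range f).subtype.exists_leftInverse_of_injective
    (Submodule.ker_subtype _)
  refine ⟨LinearMap.toMatrix' (s ∘ₗ p), ?_⟩
  apply Matrix.toLin'.injective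
  rw [Matrix.toLin'_mul, Matrix.toLin'_mul, Matrix.toLin'_toMatrix']
  refine LinearMap.ext fun v => ?_
  change f (s (p (f v))) = f v
  have h1 : p (f v) = ⟨f v, LinearMap.mem_range_self f v⟩ :=
    LinearMap.congr_fun hp ⟨f v, LinearMap.mem_range_self f v⟩
  have h2 := congrArg Subtype.val (LinearMap.congr_fun hs (p (f v)))
  rw [LinearMap.comp_apply, LinearMap.id_apply, h1] at h2
  rw [h1]
  exact h2

lemma lin_mul (u : MvPowerSeries (Fin n) ℂ) {g : MvPowerSeries (Fin n) ℂ} (hg : g ∈ fil n 1) :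
    lin n (u * g) = constantCoeff u • lin n g := by
  have h1 := lin_eq_zero (mul_mem_fil (sub_C_mem_fil u) hg)
  rw [sub_mul, map_sub, sub_eq_zero, ← smul_eq_C_mul, map_smul] at h1
  exact h1

lemma lin_derivation (hD : ∀ i, D (X i) ∈ fil n 1) {g : MvPowerSeries (Fin n) ℂ}
    (hg : g ∈ fil n 1) : lin n (D g) = ∑ j, lin n g j • lin n (D (X j)) := by
  have := lin_eq_zero (derivation_mem_fil D hD 2 (sub_linForm_mem hg))
  rw [map_sub, map_sub, sub_eq_zero] at this
  rw [this, linForm_apply, map_sum, map_sum]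
  exact Finset.sum_congr rfl fun j _ => by rw [Derivation.map_smul, map_smul]

/-- Adding to `D` a combination of the fields `∂ᵢF ∂ⱼ - ∂ⱼF ∂ᵢ`, which annihilate `F`, one can
achieve that `D` acts as multiplication by `1/2` on the linear parts of the partial derivatives of
`F`. This plays the role of the splitting lemma: it keeps the variables in which the quadratic part
of `F` is nondegenerate from receiving weights other than `1/2`. -/
lemma exists_normalized (hDF : D F = F) (hD : ∀ i, D (X i) ∈ fil n 1)
    (hF : ∀ i, pderiv ℂ i F ∈ fil n 1) :
    ∃ D' : Derivation ℂ (MvPowerSeries (Fin n) ℂ) (MvPowerSeries (Fin n) ℂ),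
      D' F = F ∧ (∀ i, D' (X i) ∈ fil n 1) ∧
      ∀ i, lin n (D' (pderiv ℂ i F)) = (1 / 2 : ℂ) • lin n (pderiv ℂ i F) := by
  classical
  let H : Matrix (Fin n) (Fin n) ℂ := Matrix.of fun i => lin n (pderiv ℂ i F)
  let A : Matrix (Fin n) (Fin n) ℂ := Matrix.of fun i => lin n (D (X i))
  have hHs : H.transpose = H := by
    ext i j
    change lin n (pderiv ℂ j F) i = lin n (pderiv ℂ i F) j
    rw [← constantCoeff_pderiv, ← constantCoeff_pderiv, pderiv_comm]
  have hHA : A.transpose * H + H * A = H := by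
    ext i k
    have h := congrFun (congrArg (lin n) (derivation_pderiv hDF i)) k
    rw [map_add, map_sum, lin_derivation hD (hF i)] at h
    simp only [lin_mul _ (hF _), constantCoeff_pderiv] at h
    simp only [Pi.add_apply, Finset.sum_apply, Pi.smul_apply, smul_eq_mul] at h
    rw [Matrix.add_apply, Matrix.mul_apply, Matrix.mul_apply]
    exact h.symm
  obtain ⟨G, hG⟩ := exists_generalized_inverse H
  set S : Matrix (Fin n) (Fin n) ℂ := H * A - (1 / 2 : ℂ) • H with hS
  have hSt : S.transpose = -S := by
    rw [hS, Matrix.transpose_sub, Matrix.transpose_smul, Matrix.transpose_mul, hHs,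
      ← eq_sub_of_add_eq hHA |>.symm]
    module
  have hHGS : H * G * S = S := by
    rw [hS, mul_sub, Matrix.mul_smul, ← Matrix.mul_assoc, hG]
  have hSGH : S * (G.transpose * H) = S := by
    have := congrArg Matrix.transpose hHGS
    rw [Matrix.transpose_mul, Matrix.transpose_mul, hSt, hHs] at this
    simpa using this
  set K : Matrix (Fin n) (Fin n) ℂ := G * S * G.transpose with hK
  have hKt : K.transpose = -K := by
    rw [hK, Matrix.transpose_mul, Matrix.transpose_mul, hSt, Matrix.transpose_transpose]
    simp [Matrix.mul_assoc]
  have hHKH : H * (K * H) = S := by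
    calc H * (K * H) = H * G * S * (G.transpose * H) := by simp only [hK, Matrix.mul_assoc]
      _ = S := by rw [hHGS, hSGH]
  let D' := D + ∑ i, ∑ j, (C (K i j) * pderiv ℂ i F) • pderiv ℂ j
  have hD'a : ∀ g, D' g = D g + ∑ i, ∑ j, C (K i j) * pderiv ℂ i F * pderiv ℂ j g := by
    intro g
    simp only [D', Derivation.add_apply, derivation_sum_apply, Derivation.smul_apply, smul_eq_mul]
  have hD'X : ∀ k, D' (X k) = D (X k) + ∑ i, K i k • pderiv ℂ i F := by
    intro k
    rw [hD'a]
    congr 1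
    refine Finset.sum_congr rfl fun i _ => ?_
    rw [Finset.sum_eq_single k]
    · rw [pderiv_X_self, mul_one, smul_eq_C_mul]
    · intro j _ hj
      rw [pderiv_X_of_ne hj.symm, mul_zero]
    · simp
  have hD'X1 : ∀ k, D' (X k) ∈ fil n 1 := fun k => by
    rw [hD'X]
    exact Submodule.add_mem _ (hD k) (Submodule.sum_mem _ fun i _ =>
      Submodule.smul_mem _ _ (hF i))
  refine ⟨D', ?_, hD'X1, fun i => ?_⟩
  · rw [hD'a, hDF]
    set s := ∑ i, ∑ j, C (K i j) * pderiv ℂ i F * pderiv ℂ j F with hs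
    have h1 : s = -s := by
      conv_lhs => rw [hs, Finset.sum_comm]
      rw [hs, ← Finset.sum_neg_distrib]
      refine Finset.sum_congr rfl fun i _ => ?_
      rw [← Finset.sum_neg_distrib]
      refine Finset.sum_congr rfl fun j _ => ?_
      have : K j i = -K i j := congrFun (congrFun hKt i) j
      rw [this, map_neg]; ring
    have h2 : s = 0 := by
      ext a
      have := congrArg (coeff a) h1
      rw [map_neg] at this
      simpa using self_eq_neg.1 this
    rw [h2, add_zero]
  · rw [lin_derivation hD'X1 (hF i)]
    have hA' : ∀ j, lin n (D' (X j)) = (A - K * H) j := by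
      intro j
      rw [hD'X, map_add, map_sum]
      ext k
      have hKij : ∀ i, K i j = -K j i := fun i => congrFun (congrFun hKt j) i
      rw [Matrix.sub_apply, Matrix.mul_apply, sub_eq_add_neg, ← Finset.sum_neg_distrib]
      simp only [Pi.add_apply, Finset.sum_apply, map_smul, Pi.smul_apply, smul_eq_mul, hKij,
        neg_mul]
      rfl
    have hfin : H * (A - K * H) = (1 / 2 : ℂ) • H := by
      rw [mul_sub, hHKH, hS, sub_sub_cancel]
    ext k
    have := congrFun (congrFun hfin i) k
    rw [Matrix.mul_apply] at this
    simp only [hA', Finset.sum_apply, Pi.smul_apply, smul_eq_mul]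
    exact this

/-! ### Weights -/

/-- In every coordinate direction the derivatives of a series with an isolated critical point
contain a power of the corresponding variable. -/
lemma exists_axis_monomial (G : MvPowerSeries (Fin n) ℂ) (i : Fin n) {K : ℕ}
    (h : X i ^ K ∈ jac G) : ∃ (b : ℕ) (j : Fin n),
      coeff (Finsupp.single i b) (pderiv ℂ j G) ≠ 0 := by
  classical
  obtain ⟨c, hc⟩ := (Submodule.mem_span_range_iff_exists_fun _).1 h
  have h1 : coeff (Finsupp.single i K) (∑ j, c j • pderiv ℂ j G) ≠ 0 := by
    rw [hc, coeff_X_pow]; simp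
  rw [map_sum] at h1
  obtain ⟨j, -, hj⟩ := Finset.exists_ne_zero_of_sum_ne_zero h1
  rw [smul_eq_mul, coeff_mul] at hj
  obtain ⟨⟨p, q⟩, hpq, hne⟩ := Finset.exists_ne_zero_of_sum_ne_zero hj
  rw [Finset.HasAntidiagonal.mem_antidiagonal] at hpq
  have hq : q = Finsupp.single i (q i) := by
    ext k
    by_cases hk : k = i
    · subst hk; simp
    · have := DFunLike.congr_fun hpq k
      rw [Finsupp.single_eq_of_ne hk] at this ⊢
      exact (Nat.add_eq_zero_iff.1 this).2
  refine ⟨q i, j, ?_⟩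
  rw [← hq]
  exact right_ne_zero_of_mul hne

/-- Complex weights for which every variable either has weight `1/2` or occurs in a monomial
`xᵢᵇ xⱼ` of weight `1` with `b ≥ 2` can be replaced by positive integral ones. A `ℚ`-linear
retraction `ℂ → ℚ` gives rational weights, and these are positive: comparing the smallest and the
largest weight through the given monomials excludes a smallest weight `≤ 0`. -/
lemma exists_weights (lam : Fin n → ℂ)
    (h : ∀ i, lam i = 1 / 2 ∨ ∃ (b : ℕ) (j : Fin n), 2 ≤ b ∧ b * lam i + lam j = 1) :
    ∃ (w : Fin n → ℕ) (d : ℕ), (∀ i, 0 < w i) ∧ 0 < d ∧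
      ∀ a : Fin n →₀ ℕ, ∑ i, a i * lam i = 1 → ∑ i, a i * w i = d := by
  obtain ⟨L, hL⟩ := (Algebra.linearMap ℚ ℂ).exists_leftInverse_of_injective
    (LinearMap.ker_eq_bot.2 (algebraMap ℚ ℂ).injective)
  have hLq : ∀ q : ℚ, L (q : ℂ) = q := fun q => LinearMap.congr_fun hL q
  let r : Fin n → ℚ := fun i => L (lam i)
  have hLmul : ∀ (m : ℕ) (z : ℂ), L (m * z) = m * L z := fun m z => by
    rw [← nsmul_eq_mul, map_nsmul, nsmul_eq_mul]
  have hL1 : L 1 = 1 := by simpa using hLq 1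
  have hr : ∀ i, r i = 1 / 2 ∨ ∃ (b : ℕ) (j : Fin n), 2 ≤ b ∧ b * r i + r j = 1 := by
    intro i
    rcases h i with h | ⟨b, j, hb, h⟩
    · left
      have := hLq (1 / 2)
      simp only [r, h]
      simpa using this
    · right
      refine ⟨b, j, hb, ?_⟩
      rw [← hLmul, ← map_add, h, hL1]
  have hpos : ∀ i, 0 < r i := by
    by_contra! hc
    obtain ⟨i₀, hi₀⟩ := hc
    have : Nonempty (Fin n) := ⟨i₀⟩
    obtain ⟨i, hi⟩ := Finite.exists_min r
    obtain ⟨j, hj⟩ := Finite.exists_max r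
    have hi0 : r i ≤ 0 := (hi i₀).trans hi₀
    rcases hr i with h1 | ⟨b, k, hb, h1⟩
    · rw [h1] at hi0; norm_num at hi0
    have hb' : (2 : ℚ) ≤ b := by exact_mod_cast hb
    have hk : 1 - 2 * r i ≤ r j := by nlinarith [hj k]
    rcases hr j with h2 | ⟨c, l, hc, h2⟩
    · linarith
    have hc' : (2 : ℚ) ≤ c := by exact_mod_cast hc
    nlinarith [hi l]
  let d : ℕ := ∏ i, (r i).den
  have hd : 0 < d := Finset.prod_pos fun i _ => (r i).den_pos
  have hw : ∀ i, ∃ m : ℕ, (m : ℚ) = d * r i := by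
    intro i
    obtain ⟨c, hc⟩ : (r i).den ∣ d := Finset.dvd_prod_of_mem _ (Finset.mem_univ i)
    refine ⟨c * (r i).num.toNat, ?_⟩
    have h1 : (((r i).num.toNat : ℤ) : ℚ) = (r i).num := by
      rw [Int.toNat_of_nonneg (Rat.num_nonneg.2 (hpos i).le)]
    rw [Int.cast_natCast] at h1
    rw [hc]
    push_cast
    rw [h1, mul_comm ((r i).den : ℚ), mul_assoc, mul_comm ((r i).den : ℚ), Rat.mul_den_eq_num]
  choose w hw using hw
  refine ⟨w, d, fun i => ?_, hd, fun a ha => ?_⟩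
  · have : (0 : ℚ) < w i := by
      rw [hw]; exact mul_pos (by exact_mod_cast hd) (hpos i)
    exact_mod_cast this
  · have h1 : ∑ i, (a i : ℚ) * r i = 1 := by
      rw [← hL1, ← ha, map_sum]
      simp only [hLmul, r]
    have : ((∑ i, a i * w i : ℕ) : ℚ) = d := by
      push_cast
      calc ∑ i, (a i : ℚ) * w i = d * ∑ i, (a i : ℚ) * r i := by
            rw [Finset.mul_sum]
            refine Finset.sum_congr rfl fun i _ => ?_
            rw [hw]; ring
        _ = d := by rw [h1, mul_one]
    exact_mod_cast this

/-! ### Saito's theorem for power series -/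

/-- A power series that vanishes at the origin and is not critical there is a coordinate. -/
lemma exists_equiv_of_regular (h0 : constantCoeff F = 0) {i : Fin n} (hi : lin n F i ≠ 0) :
    ∃ φ : MvPowerSeries (Fin n) ℂ ≃ₐ[ℂ] MvPowerSeries (Fin n) ℂ, φ (X i) = F := by
  classical
  obtain ⟨φ, hφ⟩ := exists_equiv (Function.update X i F) (fun j => by
      by_cases hj : j = i
      · subst hj; simpa using mem_fil_one.2 h0
      · simpa [hj] using X_mem_fil j)
    (by
      have : (Matrix.of fun j => lin n (Function.update X i F j)) =
          (1 : Matrix (Fin n) (Fin n) ℂ).updateRow i (lin n F) := by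
        ext j k
        by_cases hj : j = i
        · subst hj; simp
        · simp [hj, lin_X, Matrix.one_apply, Pi.single_apply, eq_comm]
      rw [this, isUnit_iff_ne_zero]
      rw [← Matrix.cramer_transpose_apply, Matrix.transpose_one, Matrix.cramer_one]
      exact hi)
  exact ⟨φ, by simpa using hφ i⟩

/-- The chain rule, as an inclusion of jacobian ideals. -/
lemma symm_mem_jac (φ : MvPowerSeries (Fin n) ℂ ≃ₐ[ℂ] MvPowerSeries (Fin n) ℂ)
    {g : MvPowerSeries (Fin n) ℂ} (hg : g ∈ jac F) : φ.symm g ∈ jac (φ.symm F) := by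
  induction hg using Submodule.span_induction with
  | mem x hx =>
    obtain ⟨i, rfl⟩ := hx
    have := derivation_eq (conj φ (pderiv ℂ i)) (φ.symm F)
    rw [conj_apply, AlgEquiv.apply_symm_apply] at this
    simp only [this]
    exact Ideal.sum_mem _ fun j _ => Ideal.mul_mem_left _ _ (pderiv_mem_jac _ j)
  | zero => simp
  | add x y _ _ hx hy => rw [map_add]; exact Ideal.add_mem _ hx hy
  | smul a x hx ih => rw [smul_eq_mul, map_mul]; exact Ideal.mul_mem_left _ _ ih

/-- The case of a critical point at the origin. -/
lemma exists_quasihomogeneous (h0 : constantCoeff F = 0)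
    (hF : ∀ i, pderiv ℂ i F ∈ fil n 1) [FiniteDimensional ℂ (MvPowerSeries (Fin n) ℂ ⧸ jac F)]
    (hFJ : F ∈ jac F) :
    ∃ (w : Fin n → ℕ) (d : ℕ), (∀ i, 0 < w i) ∧ 0 < d ∧
      ∃ G : MvPowerSeries (Fin n) ℂ, (∀ a, coeff a G ≠ 0 → ∑ i, a i * w i = d) ∧
        ∃ φ : MvPowerSeries (Fin n) ℂ ≃ₐ[ℂ] MvPowerSeries (Fin n) ℂ, φ G = F := by
  classical
  have hF2 : F ∈ fil n 2 := mem_fil_two_of_lin (mem_fil_one.2 h0) (by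
    ext i
    rw [← constantCoeff_pderiv, mem_fil_one.1 (hF i), Pi.zero_apply])
  obtain ⟨c, hc⟩ := (Submodule.mem_span_range_iff_exists_fun _).1 hFJ
  have hD₀ : (∑ i, c i • pderiv ℂ i) F = F := by
    rw [derivation_sum_apply]; exact hc
  obtain ⟨D, hDF, hD, hhalf⟩ := exists_normalized hD₀ (derivation_X_mem hD₀ hF) hF
  obtain ⟨φ, lam, hφ⟩ := exists_eigen_coordinates hD
  set G := φ.symm F with hG
  have hGF : φ G = F := by rw [hG, AlgEquiv.apply_symm_apply]
  have hG2 : G ∈ fil n 2 := equiv_mem_fil φ.symm 2 hF2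
  -- In the new coordinates `D` becomes `D₁`.
  set D₁ := conj φ D with hD₁
  have hsh : ∀ (μ : ℂ) (N : ℕ) (g : MvPowerSeries (Fin n) ℂ),
      (shift D₁ μ ^ N) g = φ.symm ((shift D μ ^ N) (φ g)) := by
    intro μ N
    induction N with
    | zero => intro g; simp
    | succ N ih =>
      intro g
      rw [shift_pow_succ, ih, shift_pow_succ]
      congr 2
      simp [shift_apply, hD₁, conj_apply]
  have hD₁X : ∀ i, D₁ (X i) ∈ fil n 1 := fun i =>
    equiv_mem_fil φ.symm 1 (derivation_mem_fil D hD 1 (equiv_X_mem_fil φ i))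
  have hX : ∀ i, IsGen D₁ (lam i) (X i) := fun i k => by
    obtain ⟨N, hN⟩ := hφ i k
    exact ⟨N, by rw [hsh]; exact equiv_mem_fil φ.symm k hN⟩
  have hwt : ∀ a, coeff a G ≠ 0 → ∑ i, a i * lam i = 1 := by
    intro a ha
    refine weight_eq_of_coeff_ne_zero hD₁X hX (N := 1) (k := a.degree + 1) (h := G) ?_
      (Nat.lt_succ_self _) ha
    rw [hsh, hGF, pow_one, shift_apply, hDF, one_smul, sub_self, map_zero]
    exact Submodule.zero_mem _
  have hhalf₁ : ∀ i j, coeff (Finsupp.single i 1) (pderiv ℂ j G) ≠ 0 → lam i = 1 / 2 := by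
    intro i j hij
    have := weight_eq_of_coeff_ne_zero hD₁X hX (μ := 1 / 2) (N := 1) (k := 2)
      (h := pderiv ℂ j G) ?_ (by simp) hij
    · simpa [Finsupp.single_apply] using this
    rw [hsh, pow_one]
    refine equiv_mem_fil φ.symm 2 ?_
    have h1 : φ (pderiv ℂ j G) = ∑ k, conj φ.symm (pderiv ℂ j) (X k) * pderiv ℂ k F := by
      rw [← derivation_eq, conj_apply]; rfl
    rw [h1, map_sum]
    refine Submodule.sum_mem _ fun k _ => ?_
    have h2 : ∀ u : MvPowerSeries (Fin n) ℂ, D u ∈ fil n 1 := fun u => by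
      rw [derivation_eq D u]
      refine Submodule.sum_mem _ fun l _ => ?_
      rw [mul_comm]
      exact mul_mem_fil_left _ (hD l)
    have h3 : D (pderiv ℂ k F) - (1 / 2 : ℂ) • pderiv ℂ k F ∈ fil n 2 := by
      refine mem_fil_two_of_lin ?_ ?_
      · exact Submodule.sub_mem _ (h2 _) (Submodule.smul_mem _ _ (hF k))
      · rw [map_sub, hhalf, map_smul, sub_self]
    set u := conj φ.symm (pderiv ℂ j) (X k)
    have h4 : shift D (1 / 2) (u * pderiv ℂ k F) =
        u * (D (pderiv ℂ k F) - (1 / 2 : ℂ) • pderiv ℂ k F) + D u * pderiv ℂ k F := by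
      rw [shift_apply, Derivation.leibniz]
      simp only [smul_eq_mul, smul_eq_C_mul]
      ring
    rw [h4]
    exact Submodule.add_mem _ (mul_mem_fil_left _ h3) (mul_mem_fil (h2 u) (hF k))
  have hax : ∀ i, lam i = 1 / 2 ∨ ∃ (b : ℕ) (j : Fin n), 2 ≤ b ∧ b * lam i + lam j = 1 := by
    intro i
    obtain ⟨K, hK⟩ := exists_pow_mem (jac F) (equiv_X_mem_fil φ i)
    have hK' : X i ^ K ∈ jac G := by simpa using symm_mem_jac φ hK
    obtain ⟨b, j, hb⟩ := exists_axis_monomial G i hK'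
    have hb' : coeff (Finsupp.single i b + Finsupp.single j 1) G ≠ 0 := by
      rw [coeff_pderiv] at hb
      exact left_ne_zero_of_mul hb
    have h1 := hwt _ hb'
    have h2 : (b : ℂ) * lam i + lam j = 1 := by
      simpa [add_mul, Finset.sum_add_distrib, Finsupp.single_apply] using h1
    rcases b with _ | _ | b
    · exact absurd (mem_fil.1 hG2 _ (by simp)) hb'
    · exact Or.inl (hhalf₁ i j hb)
    · exact Or.inr ⟨_, j, by omega, h2⟩
  obtain ⟨w, d, hw, hd, hwd⟩ := exists_weights lam hax
  exact ⟨w, d, hw, hd, G, fun a ha => hwd a (hwt a ha), φ, hGF⟩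

end MvPowerSeries.Saito

/-! ### Saito's theorem for polynomials -/

lemma jacobianIdeal_eq_jac {n : ℕ} (f : MvPolynomial (Fin n) ℂ) :
    jacobianIdeal f = MvPowerSeries.Saito.jac (f : MvPowerSeries (Fin n) ℂ) := by
  unfold jacobianIdeal MvPowerSeries.Saito.jac
  congr 2
  funext i
  rw [MvPowerSeries.pderiv_coe]

/-- A power series all of whose monomials have the same degree with respect to positive weights is
a quasihomogeneous polynomial. -/
lemma exists_isWeightedHomogeneous {n : ℕ} {w : Fin n → ℕ} {d : ℕ} (hw : ∀ i, 0 < w i)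
    {G : MvPowerSeries (Fin n) ℂ}
    (hG : ∀ a, MvPowerSeries.coeff a G ≠ 0 → ∑ i, a i * w i = d) :
    ∃ g : MvPolynomial (Fin n) ℂ, g.IsWeightedHomogeneous w d ∧
      (g : MvPowerSeries (Fin n) ℂ) = G := by
  have hg : ((MvPowerSeries.truncTotal (d + 1) G : MvPolynomial (Fin n) ℂ) :
      MvPowerSeries (Fin n) ℂ) = G := by
    ext a
    rw [MvPolynomial.coeff_coe, MvPowerSeries.coeff_truncTotal_eq_ite]
    split_ifs with h
    · rfl
    · by_contra hne
      refine h ?_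
      rw [Nat.lt_succ_iff, ← hG a (Ne.symm hne), Finsupp.degree_eq_sum]
      exact Finset.sum_le_sum fun i _ => Nat.le_mul_of_pos_right _ (hw i)
  refine ⟨_, fun a ha => ?_, hg⟩
  rw [← MvPolynomial.coeff_coe, hg] at ha
  rw [Finsupp.weight_apply, Finsupp.sum_fintype _ _ (by simp)]
  simpa using hG a ha

/-- **Saito's theorem** (formal version for polynomials). If f has zero constant term, an
isolated singularity and f ∈ j(f), then f is an automorphism image of a quasihomogeneous
polynomial of some type (w; d) with positive weights and positive degree. -/
theorem statement_9 {n : ℕ} (f : MvPolynomial (Fin n) ℂ)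
    (hf0 : constantCoeff f = 0)
    (hfin : FiniteDimensional ℂ (MilnorAlgebra f))
    (hfj : (f : MvPowerSeries (Fin n) ℂ) ∈ jacobianIdeal f) :
    ∃ (w : Fin n → ℕ) (d : ℕ), (∀ i, 0 < w i) ∧ 0 < d ∧
      ∃ g : MvPolynomial (Fin n) ℂ, g.IsWeightedHomogeneous w d ∧
        ∃ φ : MvPowerSeries (Fin n) ℂ ≃ₐ[ℂ] MvPowerSeries (Fin n) ℂ,
          φ (g : MvPowerSeries (Fin n) ℂ) = (f : MvPowerSeries (Fin n) ℂ) := by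
  classical
  have hJ := jacobianIdeal_eq_jac f
  set F := (f : MvPowerSeries (Fin n) ℂ) with hFdef
  have h0 : MvPowerSeries.constantCoeff F = 0 := by
    rw [← MvPowerSeries.coeff_zero_eq_constantCoeff_apply, hFdef, MvPolynomial.coeff_coe]
    exact hf0
  have hfin' : FiniteDimensional ℂ
      (MvPowerSeries (Fin n) ℂ ⧸ MvPowerSeries.Saito.jac F) := by
    rw [← hJ]; exact hfin
  rw [hJ] at hfj
  by_cases hF : ∀ i, MvPowerSeries.pderiv ℂ i F ∈ MvPowerSeries.Saito.fil n 1
  · obtain ⟨w, d, hw, hd, G, hG, φ, hφ⟩ :=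
      MvPowerSeries.Saito.exists_quasihomogeneous h0 hF hfj
    obtain ⟨g, hg, rfl⟩ := exists_isWeightedHomogeneous hw hG
    exact ⟨w, d, hw, hd, g, hg, φ, hφ⟩
  · push Not at hF
    obtain ⟨i, hi⟩ := hF
    rw [MvPowerSeries.Saito.mem_fil_one, MvPowerSeries.Saito.constantCoeff_pderiv] at hi
    obtain ⟨φ, hφ⟩ := MvPowerSeries.Saito.exists_equiv_of_regular h0 hi
    exact ⟨1, 1, fun _ => one_pos, one_pos, MvPolynomial.X i,
      MvPolynomial.isWeightedHomogeneous_X ℂ 1 i, φ, by rw [MvPolynomial.coe_X]; exact hφ⟩
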